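/- Let K be an algebraically closed field of characteristic 0, let f and g be nonconstant, relatively prime polynomials in K[t], set A = f² − g², B = 2fg, C = f² + g², and let w ∈ K[t] be a nonconstant polynomial. Suppose (x, y, z) is a solution in positive integers of (wA)^x + (wB)^y = (wC)^z with z < m, where m = min{x, y}. Then, writing δ(p) for the degree of a polynomial p: x·δ(A) ≤ δ(A) + δ(B) + δ(C) − 1, y·δ(B) ≤ δ(A) + δ(B) + δ(C) − 1, and z·δ(C) < δ(A) + δ(B) + δ(C) + m·δ(w) − 1. -/

import Mathlib

open Polynomial

/-!
Let `m = min x y`. Cancelling `w ^ z` from the equation leaves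
`w ^ (m - z) * (a + b) = C ^ z` with `a = w ^ (x - m) * A ^ x` and `b = w ^ (y - m) * B ^ y`.
As `A` and `B` are coprime to `C`, they are also coprime to `w` and to each other, and one of the
exponents `x - m` and `y - m` is zero; so `a` and `b` are coprime. Every prime factor of `w` or of
`a + b` divides `C`, so the radical of `a * b * (a + b)` divides `A * B * C`, and the
Mason–Stothers theorem bounds the degrees of `a`, `b` and `a + b` by `δ(A) + δ(B) + δ(C) - 1`.
-/

section Coprimality

variable {R : Type*} [CommRing R]

theorem isCoprime_of_add_eq_pow {a c u v : R} {n : ℕ} (hac : IsCoprime a c) (hau : a ∣ u)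
    (h : u + v = c ^ n) : IsCoprime a v := by
  obtain ⟨t, rfl⟩ := hau
  exact (h ▸ hac.pow_right).of_mul_add_left_right

theorem isCoprime_of_pow_mul_pow_add_eq_pow {a c u w b : R} {k y n : ℕ} (hk : 0 < k) (hy : 0 < y)
    (hac : IsCoprime a c) (hau : a ∣ u) (h : u + w ^ k * b ^ y = c ^ n) :
    IsCoprime a w ∧ IsCoprime a b := by
  have hcop : IsCoprime a (w ^ k * b ^ y) := isCoprime_of_add_eq_pow hac hau h
  exact ⟨(IsCoprime.pow_right_iff hk).mp hcop.of_mul_right_left,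
    (IsCoprime.pow_right_iff hy).mp hcop.of_mul_right_right⟩

theorem isCoprime_sq_sub_sq_sq_add_sq {f g : R} (h2 : IsUnit (2 : R)) (hfg : IsCoprime f g) :
    IsCoprime (f ^ 2 - g ^ 2) (f ^ 2 + g ^ 2) := by
  have hg : IsCoprime (f ^ 2 - g ^ 2) (g ^ 2) := by
    simpa only [mul_one] using IsCoprime.sub_mul_left_left_iff (z := 1).mpr hfg.pow
  have h := ((isCoprime_mul_unit_left_right h2 _ _).mpr hg).add_mul_left_right 1
  rwa [show 2 * g ^ 2 + (f ^ 2 - g ^ 2) * 1 = f ^ 2 + g ^ 2 by ring] at h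

theorem isCoprime_left_sq_add_sq {f g : R} (hfg : IsCoprime f g) :
    IsCoprime f (f ^ 2 + g ^ 2) := by
  simpa only [sq] using (hfg.pow_right (n := 2)).mul_add_left_right f

theorem isCoprime_two_mul_mul_sq_add_sq {f g : R} (h2 : IsUnit (2 : R)) (hfg : IsCoprime f g) :
    IsCoprime (2 * f * g) (f ^ 2 + g ^ 2) := by
  have hg : IsCoprime g (f ^ 2 + g ^ 2) := add_comm (g ^ 2) (f ^ 2) ▸
    isCoprime_left_sq_add_sq hfg.symm
  exact ((isCoprime_mul_unit_left_left h2 _ _).mpr (isCoprime_left_sq_add_sq hfg)).mul_left hg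

theorem sq_add_sq_ne_zero_of_isCoprime {f g : R} (hf : ¬IsUnit f) (hfg : IsCoprime f g) :
    f ^ 2 + g ^ 2 ≠ 0 := fun h =>
  hf (isCoprime_zero_right.mp (h ▸ isCoprime_left_sq_add_sq hfg))

end Coprimality

section Reduction

variable {R : Type*} [CommSemiring R]

theorem isCoprime_pow_mul_pow {a b w : R} {i j x y : ℕ} (hab : IsCoprime a b)
    (haw : IsCoprime a w) (hbw : IsCoprime b w) (hij : i = 0 ∨ j = 0) :
    IsCoprime (w ^ i * a ^ x) (w ^ j * b ^ y) := by
  have hw : IsCoprime (w ^ i) (w ^ j) := by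
    rcases hij with rfl | rfl
    · simpa only [pow_zero] using isCoprime_one_left
    · simpa only [pow_zero] using isCoprime_one_right
  exact (hw.mul_right hbw.symm.pow).mul_left (haw.pow.mul_right hab.pow)

theorem pow_sub_mul_add_eq_pow [IsCancelMulZero R] {A B C w : R} {x y z m : ℕ} (hw : w ≠ 0)
    (hzm : z ≤ m) (hmx : m ≤ x) (hmy : m ≤ y) (h : (w * A) ^ x + (w * B) ^ y = (w * C) ^ z) :
    w ^ (m - z) * (w ^ (x - m) * A ^ x + w ^ (y - m) * B ^ y) = C ^ z := by
  refine mul_left_cancel₀ (pow_ne_zero z hw) ?_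
  have hx : w ^ x = w ^ z * w ^ (m - z) * w ^ (x - m) := by
    rw [← pow_add, ← pow_add]; congr 1; omega
  have hy : w ^ y = w ^ z * w ^ (m - z) * w ^ (y - m) := by
    rw [← pow_add, ← pow_add]; congr 1; omega
  rw [← mul_pow, ← h, mul_pow, mul_pow, hx, hy]
  ring

theorem mul_mul_dvd_pow_mul_pow_mul_pow {A B C w s : R} {i j k x y z : ℕ} (hk : k ≠ 0)
    (h : w ^ k * s = C ^ z) :
    w ^ i * A ^ x * (w ^ j * B ^ y) * s ∣ A ^ x * B ^ y * C ^ (z * (i + j + 1)) := by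
  have hw : w ∣ C ^ z := (dvd_pow_self w hk).trans (Dvd.intro _ h)
  have hs : s ∣ C ^ z := Dvd.intro_left _ h
  calc
    w ^ i * A ^ x * (w ^ j * B ^ y) * s = A ^ x * B ^ y * (w ^ (i + j) * s) := by ring
    _ ∣ A ^ x * B ^ y * ((C ^ z) ^ (i + j) * C ^ z) :=
      mul_dvd_mul_left _ (mul_dvd_mul (pow_dvd_pow_of_dvd hw _) hs)
    _ = A ^ x * B ^ y * C ^ (z * (i + j + 1)) := by rw [pow_mul, pow_succ]

end Reduction

theorem isUnit_two_polynomial {K : Type*} [DivisionSemiring K] [NeZero (2 : K)] :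
    IsUnit (2 : K[X]) := by
  simpa only [map_ofNat] using (IsUnit.mk0 (2 : K) two_ne_zero).map (C : K →+* K[X])

theorem mul_natDegree_le_natDegree_mul_pow {R : Type*} [Semiring R] [NoZeroDivisors R]
    {q : R[X]} (hq : q ≠ 0) (p : R[X]) (n : ℕ) : n * p.natDegree ≤ (q * p ^ n).natDegree := by
  rcases eq_or_ne p 0 with rfl | hp
  · simp only [natDegree_zero, mul_zero, zero_le]
  · rw [natDegree_mul hq (pow_ne_zero n hp), natDegree_pow]
    exact Nat.le_add_left _ _

section MasonStothers

open UniqueFactorizationMonoid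

theorem radical_pow_mul_pow_mul_pow_dvd {M : Type*} [CommMonoidWithZero M]
    [NormalizationMonoid M] [UniqueFactorizationMonoid M] {a b c : M} {l m n : ℕ} :
    radical (a ^ l * b ^ m * c ^ n) ∣ a * b * c := by
  have hpow (q : M) (e : ℕ) : radical (q ^ e) ∣ q := radical_pow_dvd.trans radical_dvd_self
  calc
    radical (a ^ l * b ^ m * c ^ n) ∣ radical (a ^ l * b ^ m) * radical (c ^ n) := radical_mul_dvd
    _ ∣ radical (a ^ l) * radical (b ^ m) * radical (c ^ n) := mul_dvd_mul_right radical_mul_dvd _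
    _ ∣ a * b * c := mul_dvd_mul (mul_dvd_mul (hpow a l) (hpow b m)) (hpow c n)

variable {K : Type*} [Field K]

theorem natDegree_radical_le_of_dvd_pow_mul_pow_mul_pow [DecidableEq K] {p A B C : K[X]}
    {l m n : ℕ} (hA : A ≠ 0) (hB : B ≠ 0) (hC : C ≠ 0) (hp : p ∣ A ^ l * B ^ m * C ^ n) :
    (radical p).natDegree ≤ A.natDegree + B.natDegree + C.natDegree := by
  have hrad : radical p ∣ A * B * C :=
    (radical_dvd_radical hp (mul_ne_zero (mul_ne_zero (pow_ne_zero l hA) (pow_ne_zero m hB))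
      (pow_ne_zero n hC))).trans radical_pow_mul_pow_mul_pow_dvd
  rw [← natDegree_mul hA hB, ← natDegree_mul (mul_ne_zero hA hB) hC]
  exact natDegree_le_of_dvd hrad (mul_ne_zero (mul_ne_zero hA hB) hC)

variable [CharZero K]

/- The truncated subtraction absorbs the exceptional case of the Mason–Stothers theorem, in which
`a` and `b` are constant. -/
theorem natDegree_le_natDegree_radical_sub_one [DecidableEq K] {a b : K[X]} (ha : a ≠ 0)
    (hb : b ≠ 0) (hs : a + b ≠ 0) (hab : IsCoprime a b) :
    a.natDegree ≤ (radical (a * b * (a + b))).natDegree - 1 ∧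
      b.natDegree ≤ (radical (a * b * (a + b))).natDegree - 1 ∧
      (a + b).natDegree ≤ (radical (a * b * (a + b))).natDegree - 1 := by
  have habc := Polynomial.abc ha hb (neg_ne_zero.mpr hs) hab (add_neg_cancel _)
  rw [mul_neg, radical_eq_of_associated Associated.rfl.neg_left, natDegree_neg, derivative_neg,
    neg_eq_zero, derivative_eq_zero, derivative_eq_zero, derivative_eq_zero] at habc
  rcases habc with hbound | ⟨ha', hb', hs'⟩
  · omega
  · simp only [ha', hb', hs', zero_le, and_self]

theorem natDegree_le_of_pow_mul_add_eq_pow {A B C w : K[X]} {i j k x y z : ℕ}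
    (hAC : IsCoprime A C) (hBC : IsCoprime B C) (hC : C ≠ 0) (hw : ¬IsUnit w)
    (hx : 0 < x) (hy : 0 < y) (hk : 0 < k) (hij : i = 0 ∨ j = 0)
    (h : w ^ k * (w ^ i * A ^ x + w ^ j * B ^ y) = C ^ z) :
    (w ^ i * A ^ x).natDegree ≤ A.natDegree + B.natDegree + C.natDegree - 1 ∧
      (w ^ j * B ^ y).natDegree ≤ A.natDegree + B.natDegree + C.natDegree - 1 ∧
      (w ^ i * A ^ x + w ^ j * B ^ y).natDegree ≤
        A.natDegree + B.natDegree + C.natDegree - 1 := by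
  classical
  obtain ⟨hAw, hAB⟩ : IsCoprime A w ∧ IsCoprime A B :=
    isCoprime_of_pow_mul_pow_add_eq_pow (u := w ^ (k + i) * A ^ x) (k := k + j) (by omega) hy hAC
      (dvd_mul_of_dvd_right (dvd_pow_self A hx.ne') _) (by rw [← h]; ring)
  obtain ⟨hBw, -⟩ : IsCoprime B w ∧ IsCoprime B A :=
    isCoprime_of_pow_mul_pow_add_eq_pow (u := w ^ (k + j) * B ^ y) (k := k + i) (by omega) hx hBC
      (dvd_mul_of_dvd_right (dvd_pow_self B hy.ne') _) (by rw [← h]; ring)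
  have hA : A ≠ 0 := by rintro rfl; exact hw (isCoprime_zero_left.mp hAw)
  have hB : B ≠ 0 := by rintro rfl; exact hw (isCoprime_zero_left.mp hBw)
  have hprod : w ^ k * (w ^ i * A ^ x + w ^ j * B ^ y) ≠ 0 := h ▸ pow_ne_zero z hC
  have hw0 : w ≠ 0 := (pow_ne_zero_iff hk.ne').mp (left_ne_zero_of_mul hprod)
  have hrad := natDegree_radical_le_of_dvd_pow_mul_pow_mul_pow hA hB hC
    (mul_mul_dvd_pow_mul_pow_mul_pow (A := A) (B := B) (i := i) (j := j) (x := x) (y := y) hk.ne' h)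
  have hbound := natDegree_le_natDegree_radical_sub_one
    (mul_ne_zero (pow_ne_zero i hw0) (pow_ne_zero x hA))
    (mul_ne_zero (pow_ne_zero j hw0) (pow_ne_zero y hB))
    (right_ne_zero_of_mul hprod) (isCoprime_pow_mul_pow hAB hAw hBw hij)
  omega

theorem jesmanowicz_poly_noncoprime_bounds_z_general {A B C w : K[X]} {x y z : ℕ}
    (hAC : IsCoprime A C) (hBC : IsCoprime B C) (hC : C ≠ 0) (hw : 0 < w.natDegree)
    (heq : (w * A) ^ x + (w * B) ^ y = (w * C) ^ z) (hlt : z < min x y) :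
    x * A.natDegree ≤ A.natDegree + B.natDegree + C.natDegree - 1 ∧
      y * B.natDegree ≤ A.natDegree + B.natDegree + C.natDegree - 1 ∧
      z * C.natDegree <
        A.natDegree + B.natDegree + C.natDegree + min x y * w.natDegree - 1 := by
  have hw0 : w ≠ 0 := ne_zero_of_natDegree_gt hw
  have hred := pow_sub_mul_add_eq_pow hw0 hlt.le (min_le_left x y) (min_le_right x y) heq
  have hexp : x - min x y = 0 ∨ y - min x y = 0 := by omega
  obtain ⟨ha, hb, hs⟩ := natDegree_le_of_pow_mul_add_eq_pow hAC hBC hC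
    (not_isUnit_of_natDegree_pos w hw) (by omega) (by omega) (Nat.sub_pos_of_lt hlt) hexp hred
  refine ⟨(mul_natDegree_le_natDegree_mul_pow (pow_ne_zero _ hw0) A x).trans ha,
    (mul_natDegree_le_natDegree_mul_pow (pow_ne_zero _ hw0) B y).trans hb, ?_⟩
  have hzC : z * C.natDegree = (min x y - z) * w.natDegree +
      (w ^ (x - min x y) * A ^ x + w ^ (y - min x y) * B ^ y).natDegree := by
    have hprod := hred ▸ pow_ne_zero z hC
    rw [← natDegree_pow, ← hred, natDegree_mul (pow_ne_zero _ hw0) (right_ne_zero_of_mul hprod),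
      natDegree_pow]
  have hzC_pos : 0 < z * C.natDegree :=
    hzC ▸ Nat.add_pos_left (Nat.mul_pos (Nat.sub_pos_of_lt hlt) hw) _
  have hC_pos : 0 < C.natDegree := Nat.pos_of_mul_pos_left hzC_pos
  have hzw_pos : 0 < z * w.natDegree := Nat.mul_pos (Nat.pos_of_mul_pos_right hzC_pos) hw
  have hmw : min x y * w.natDegree = (min x y - z) * w.natDegree + z * w.natDegree := by
    rw [← add_mul, Nat.sub_add_cancel hlt.le]
  omega

end MasonStothers

theorem jesmanowicz_poly_noncoprime_bounds_z
    {K : Type*} [Field K] [CharZero K] [IsAlgClosed K]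
    (f g w : K[X])
    (hf : 0 < f.natDegree) (hg : 0 < g.natDegree)
    (hfg : IsCoprime f g) (hw : 0 < w.natDegree)
    (x y z : ℕ) (hx : 0 < x) (hy : 0 < y) (hz : 0 < z)
    (heq : (w * (f ^ 2 - g ^ 2)) ^ x + (w * (2 * f * g)) ^ y = (w * (f ^ 2 + g ^ 2)) ^ z)
    (hlt : z < min x y) :
    x * (f ^ 2 - g ^ 2).natDegree ≤
        (f ^ 2 - g ^ 2).natDegree + (2 * f * g).natDegree + (f ^ 2 + g ^ 2).natDegree - 1 ∧
      y * (2 * f * g).natDegree ≤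
        (f ^ 2 - g ^ 2).natDegree + (2 * f * g).natDegree + (f ^ 2 + g ^ 2).natDegree - 1 ∧
      z * (f ^ 2 + g ^ 2).natDegree <
        (f ^ 2 - g ^ 2).natDegree + (2 * f * g).natDegree + (f ^ 2 + g ^ 2).natDegree +
          (min x y) * w.natDegree - 1 :=
  jesmanowicz_poly_noncoprime_bounds_z_general
    (isCoprime_sq_sub_sq_sq_add_sq isUnit_two_polynomial hfg)
    (isCoprime_two_mul_mul_sq_add_sq isUnit_two_polynomial hfg)
    (sq_add_sq_ne_zero_of_isCoprime (not_isUnit_of_natDegree_pos f hf) hfg) hw heq hlt
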